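/- Let w be a Kreweras word of length 3n. Then for every i ∈ {1,…,3n}: w_i = A if σ_w^{-1}(i) > i, and w_i = ε_w(σ_w^{-1}(i)) if σ_w^{-1}(i) < i. In other words, the pair (σ_w, ε_w) determines w. -/

import Mathlib

/-- The three letters of a Kreweras word. -/
inductive KLetter : Type
  | A | B | C
deriving DecidableEq, Repr

open KLetter

/-- `w` is a Kreweras word of length `3 * n`: it has `n` `A`'s, `n` `B`'s, `n` `C`'s,
and every prefix has at least as many `A`'s as `B`'s and at least as many `A`'s as `C`'s. -/
def IsKrewerasWord (n : ℕ) (w : List KLetter) : Prop :=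
  w.length = 3 * n ∧ w.count A = n ∧ w.count B = n ∧ w.count C = n ∧
  ∀ k : ℕ, (w.take k).count B ≤ (w.take k).count A ∧
           (w.take k).count C ≤ (w.take k).count A

/-- `kiota w` is the smallest index `ι ≥ 1` (1-indexed) such that the prefix of
length `ι` of `w` has equally many `A`'s as `B`'s, or equally many `A`'s as `C`'s
(and `0` if no such index exists). -/
def kiota (w : List KLetter) : ℕ :=
  (((List.range (w.length + 1)).filter fun k =>
      decide (1 ≤ k) &&
      (((w.take k).count A == (w.take k).count B) ||
       ((w.take k).count A == (w.take k).count C))).headD 0)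

/-- Promotion of a Kreweras word:
`pro w = (w₂, …, w_{ι-1}, A, w_{ι+1}, …, w_{3n}, w_ι)` where `ι = kiota w`. -/
def pro (w : List KLetter) : List KLetter :=
  ((w.drop 1).set (kiota w - 2) A) ++ [w.getD (kiota w - 1) A]

/-- The trip permutation `σ_w` of a Kreweras word of length `3 * n`, as a function on
1-indexed positions: `σ_w i` is the unique element of `{1, …, 3n}` congruent to
`kiota (pro^[i-1] w) + i - 1` modulo `3 * n`. -/
def ksigma (n : ℕ) (w : List KLetter) (i : ℕ) : ℕ :=
  (kiota (pro^[i - 1] w) + i - 2) % (3 * n) + 1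

/-- `keps w i` is the letter of `pro^[i-1] w` in (1-indexed) position `kiota (pro^[i-1] w)`. -/
def keps (w : List KLetter) (i : ℕ) : KLetter :=
  (pro^[i - 1] w).getD (kiota (pro^[i - 1] w) - 1) A

/-- The negation swapping `B` and `C` (and fixing `A`). -/
def negL : KLetter → KLetter
  | A => A
  | B => C
  | C => B

open Classical in
/-- The involution `τ_i` on Kreweras words of length `3 * n`: swap the letters in
(1-indexed) positions `i` and `i + 1` if the result is again a Kreweras word,
and otherwise do nothing. -/
noncomputable def tau (n i : ℕ) (w : List KLetter) : List KLetter :=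
  let w' := (w.set (i - 1) (w.getD i A)).set i (w.getD (i - 1) A)
  if IsKrewerasWord n w' then w' else w

/-- `tauDown n j = τ_j ∘ τ_{j-1} ∘ ⋯ ∘ τ_1`. -/
noncomputable def tauDown (n : ℕ) : ℕ → List KLetter → List KLetter
  | 0, w => w
  | j + 1, w => tau n (j + 1) (tauDown n j w)

/-- `evacAux n j = (tauDown n 1) ∘ (tauDown n 2) ∘ ⋯ ∘ (tauDown n j)`. -/
noncomputable def evacAux (n : ℕ) : ℕ → List KLetter → List KLetter
  | 0, w => w
  | j + 1, w => evacAux n j (tauDown n (j + 1) w)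

/-- Evacuation on Kreweras words of length `3 * n`:
`evac = (τ_1) ∘ (τ_2 ∘ τ_1) ∘ ⋯ ∘ (τ_{3n-1} ∘ ⋯ ∘ τ_2 ∘ τ_1)`. -/
noncomputable def evac (n : ℕ) (w : List KLetter) : List KLetter :=
  evacAux n (3 * n - 1) w

/-- `tauAsc n k c = τ_{k+c-1} ∘ ⋯ ∘ τ_{k+1} ∘ τ_k`. -/
noncomputable def tauAsc (n k : ℕ) : ℕ → List KLetter → List KLetter
  | 0, w => w
  | j + 1, w => tau n (k + j) (tauAsc n k j w)

/-- `evacStarAux n j = (tauAsc n 1 (3n-1)) ∘ (tauAsc n 2 (3n-2)) ∘ ⋯ ∘ (tauAsc n j (3n-j))`. -/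
noncomputable def evacStarAux (n : ℕ) : ℕ → List KLetter → List KLetter
  | 0, w => w
  | j + 1, w => evacStarAux n j (tauAsc n (j + 1) (3 * n - (j + 1)) w)

/-- Dual evacuation on Kreweras words of length `3 * n`:
`evac* = (τ_{3n-1} ∘ ⋯ ∘ τ_1) ∘ (τ_{3n-1} ∘ ⋯ ∘ τ_2) ∘ ⋯ ∘ (τ_{3n-1})`. -/
noncomputable def evacStar (n : ℕ) (w : List KLetter) : List KLetter :=
  evacStarAux n (3 * n - 1) w

/-- The three-element "V"-shaped poset: `a < b`, `a < c`, with `b`, `c` incomparable. -/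
inductive VP : Type
  | a | b | c
deriving DecidableEq

instance : PartialOrder VP where
  le x y := x = y ∨ x = VP.a
  le_refl x := Or.inl rfl
  le_trans x y z hxy hyz := by
    rcases hxy with rfl | rfl
    · exact hyz
    · exact Or.inr rfl
  le_antisymm x y hxy hyx := by
    rcases hxy with rfl | rfl
    · rfl
    · rcases hyx with rfl | rfl <;> rfl

/-- The labeling of elements of `V(n) = VP × Fin n` by letters. -/
def vlabel {n : ℕ} (p : VP × Fin n) : KLetter :=
  match p.1 with
  | VP.a => A
  | VP.b => B
  | VP.c => C

/-- `L` is a linear extension of `V(n) = VP × Fin n` (with the product order):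
a list of all elements of `V(n)`, each appearing once, such that `L_i ≤ L_j`
implies `i ≤ j`. -/
def IsLinearExtension (n : ℕ) (L : List (VP × Fin n)) : Prop :=
  L.Nodup ∧ (∀ p : VP × Fin n, p ∈ L) ∧
  ∀ i j : Fin L.length, L.get i ≤ L.get j → (i : ℕ) ≤ (j : ℕ)

/-- A connected Kreweras word: a Kreweras word of length `3 * n` having no proper
nonempty consecutive substring which is itself a Kreweras word. -/
def ConnectedKrewerasWord (n : ℕ) (w : List KLetter) : Prop :=
  IsKrewerasWord n w ∧
  ∀ (u : List KLetter) (m : ℕ), u <:+: w → u ≠ [] → u ≠ w → ¬ IsKrewerasWord m u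

/-!
Stack the words `w, pro w, pro² w, …`, shifting each one column to the right of its predecessor.
Then `σ_w(j)` is, modulo `3n`, the column where the trip of the first letter of `pro^[j-1] w` ends,
and we follow this trip down the stack to `w` itself. In each row the end of a trip is expressed by
the heights `#A - #B` and `#A - #C` alone: an `A` pairs with the first letter that brings back one
of the two heights, while from a closing letter the two heights race, level by level, to the left
and to the right, each side having a designated leader, and the trip ends where a leader is first
overtaken. Undoing a promotion leaves the end of the trip unchanged, with one exception: a trip
ending at the last letter of a row ends, one row below, at the first letter, which is an `A`, and
from there on it ends to the left of its start. If `σ_w` wraps around, so that `σ_w(j) = i < j`,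
the exception occurs when row `i - 1` is reached, and hence `w_i = A`. If not, no promotion before
the `j`-th touches the letter `w_i = ε_w(j)`.
-/

/-- How heights change under promotion. Letter `k` joins the heights at the columns `k` and `k + 1`;
a word occupies the columns `r, …, e` and its promotion the columns `r + 1, …, e + 1`. The letter
`h` is the one that promotion turns into an `A`; `x` and `x'` are the heights before and after
promotion for the colour of that letter, `y` and `y'` those for the other colour. -/
structure PromotionStep (r e h : ℕ) (x y x' y' : ℕ → ℤ) : Prop where
  left_eq : x r = 0 ∧ y r = 0
  right_eq : x e = 0 ∧ y e = 0
  nonneg : ∀ p, r ≤ p → p ≤ e → 0 ≤ x p ∧ 0 ≤ y p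
  left_lt : r < h
  lt_right : h < e
  pos : ∀ p, r < p → p ≤ h → 1 ≤ x p ∧ 1 ≤ y p
  hit : x h = 1 ∧ x (h + 1) = 0 ∧ y (h + 1) = y h
  before : ∀ p, r < p → p ≤ h → x' p = x p - 1 ∧ y' p = y p - 1
  after : ∀ p, h < p → p ≤ e → x' p = x p + 1 ∧ y' p = y p
  last : x' (e + 1) = 0 ∧ y' (e + 1) = 0

/-- Walking from `a` to `b` in either direction, `f` is the leader of the race with `g`: it descends
to each depth at most `t` below its starting height no later than `g` does. -/
def Ahead (f g : ℕ → ℤ) (a b : ℕ) (t : ℤ) : Prop :=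
  ∀ p ∈ Set.uIcc a b, ∃ d ∈ Set.uIcc a p, f d - f a ≤ max (g p - g a) (-t)

/-- Walking from `a` to `b` in either direction, `f` reaches depth `t` below its starting height
exactly on arrival, and `g` does not reach that depth at all. -/
def DropsFirst (f g : ℕ → ℤ) (a b : ℕ) (t : ℤ) : Prop :=
  f b = f a - t ∧ ∀ p ∈ Set.uIcc a b, g a - t < g p ∧ (p ≠ b → f a - t < f p)

section Ahead
variable {f g f' g' : ℕ → ℤ} {a b c : ℕ} {s t : ℤ}

theorem Ahead.zero : Ahead f g a b 0 :=
  fun _ _ => ⟨a, Set.left_mem_uIcc, by simp⟩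

theorem Ahead.of_le (hg : ∀ p ∈ Set.uIcc a b, g a ≤ g p) : Ahead f g a b t :=
  fun p hp => ⟨a, Set.left_mem_uIcc, by have := hg p hp; omega⟩

theorem Ahead.restrict (H : Ahead f g a c t) (hb : b ∈ Set.uIcc a c) : Ahead f g a b t :=
  fun p hp => H p (Set.uIcc_subset_uIcc_left hb hp)

theorem Ahead.anti (H : Ahead f g a b t) (hst : s ≤ t) : Ahead f g a b s := by
  intro p hp
  obtain ⟨d, hd, hle⟩ := H p hp
  exact ⟨d, hd, by omega⟩

theorem Ahead.of_floor (H : Ahead f g a b s) (hg : ∀ p ∈ Set.uIcc a b, g a - s ≤ g p) :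
    Ahead f g a b t := by
  intro p hp
  obtain ⟨d, hd, hle⟩ := H p hp
  have := hg p hp
  exact ⟨d, hd, by omega⟩

theorem Ahead.translate (H : Ahead f' g' a b t)
    (hfg : ∀ p ∈ Set.uIcc a b, f p - f a = f' p - f' a ∧ g p - g a = g' p - g' a) :
    Ahead f g a b t := by
  intro p hp
  obtain ⟨d, hd, hle⟩ := H p hp
  have := hfg p hp
  have := hfg d (Set.uIcc_subset_uIcc_left hp hd)
  exact ⟨d, hd, by omega⟩

theorem DropsFirst.translate (H : DropsFirst f' g' a b t)
    (hfg : ∀ p ∈ Set.uIcc a b, f p - f a = f' p - f' a ∧ g p - g a = g' p - g' a) :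
    DropsFirst f g a b t := by
  refine ⟨?_, fun p hp => ?_⟩
  · have := hfg b Set.right_mem_uIcc
    have := H.1
    omega
  · have := hfg p hp
    have := H.2 p hp
    omega

theorem Ahead.extend_of_drop (H : Ahead f g a b t)
    (hdrop : ∀ p ∈ Set.uIcc a c, p ∉ Set.uIcc a b → ∃ d ∈ Set.uIcc a p, f d ≤ f a - t) :
    Ahead f g a c t := by
  intro p hp
  by_cases hpb : p ∈ Set.uIcc a b
  · exact H p hpb
  · obtain ⟨d, hd, hle⟩ := hdrop p hp hpb
    exact ⟨d, hd, by omega⟩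

theorem Ahead.extend_of_le (H : Ahead f g a b t)
    (hle : ∀ p ∈ Set.uIcc a c, p ∉ Set.uIcc a b → b ∈ Set.uIcc a p ∧ g b ≤ g p) :
    Ahead f g a c t := by
  intro p hp
  by_cases hpb : p ∈ Set.uIcc a b
  · exact H p hpb
  · obtain ⟨hb, hgb⟩ := hle p hp hpb
    obtain ⟨d, hd, hle⟩ := H b Set.right_mem_uIcc
    exact ⟨d, Set.uIcc_subset_uIcc_left hb hd, by omega⟩
end Ahead

/-- The trip of an `A` at letter `m` ends at letter `q`, the first one to bring `x` or `y` back to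
its height before `m`. -/
structure OpenerTrip (e m q : ℕ) (x y : ℕ → ℤ) : Prop where
  lt : m < q
  lt_right : q < e
  letter : x (m + 1) = x m + 1 ∧ y (m + 1) = y m + 1
  le : ∀ p, m < p → p ≤ q → x (m + 1) ≤ x p ∧ y (m + 1) ≤ y p
  drop : x (q + 1) = x m ∨ y (q + 1) = y m

/-- The trip of a closing letter `m` of colour `x` ends to its right, at letter `q`. On the left of
`m` the leader is `y`, on the right it is `x`; both lead at all depths before `t`, the left leader
also at depth `t`, where the right one is overtaken. -/
structure RightTrip (r e m q : ℕ) (t : ℤ) (x y : ℕ → ℤ) : Prop where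
  lt : m < q
  lt_right : q < e
  letter : x (m + 1) = x m - 1 ∧ y (m + 1) = y m
  one_le : 1 ≤ t
  left : Ahead y x m r t
  right : Ahead x y (m + 1) (q + 1) (t - 1)
  drop : DropsFirst y x (m + 1) (q + 1) t

/-- The trip of a closing letter `m` of colour `x` ends to its left, at letter `q`: in the two races
of `RightTrip`, both leaders lead at all depths before `t`, and at depth `t` the left one is
overtaken. -/
structure LeftTrip (r e m q : ℕ) (t : ℤ) (x y : ℕ → ℤ) : Prop where
  left_le : r ≤ q
  lt : q < m
  letter : x (m + 1) = x m - 1 ∧ y (m + 1) = y m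
  one_le : 1 ≤ t
  left : Ahead y x m q (t - 1)
  right : Ahead x y (m + 1) e (t - 1)
  drop : DropsFirst x y m q t

namespace PromotionStep
variable {r e h m q : ℕ} {t : ℤ} {x y x' y' : ℕ → ℤ}

theorem sub_eq_of_le_hit (H : PromotionStep r e h x y x' y') {a b : ℕ}
    (ha : r < a ∧ a ≤ h) (hb : r < b ∧ b ≤ h) :
    ∀ p ∈ Set.uIcc a b, x p - x a = x' p - x' a ∧ y p - y a = y' p - y' a := by
  intro p hp
  rw [Set.mem_uIcc] at hp
  have := H.before a ha.1 ha.2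
  have := H.before p (by omega) (by omega)
  omega

theorem sub_eq_of_hit_lt (H : PromotionStep r e h x y x' y') {a b : ℕ}
    (ha : h < a ∧ a ≤ e) (hb : h < b ∧ b ≤ e) :
    ∀ p ∈ Set.uIcc a b, x p - x a = x' p - x' a ∧ y p - y a = y' p - y' a := by
  intro p hp
  rw [Set.mem_uIcc] at hp
  have := H.after a ha.1 ha.2
  have := H.after p (by omega) (by omega)
  omega

theorem nonneg_promoted (H : PromotionStep r e h x y x' y') {p : ℕ} (hrp : r < p)
    (hpe : p ≤ e + 1) : 0 ≤ x' p ∧ 0 ≤ y' p := by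
  rcases le_or_gt p h with hph | hph
  · have := H.before p hrp hph
    have := H.pos p hrp hph
    omega
  rcases hpe.lt_or_eq with hpe | rfl
  · have := H.after p hph (by omega)
    have := H.nonneg p (by omega) (by omega)
    omega
  · have := H.last
    omega

theorem opener_at_hit (H : PromotionStep r e h x y x' y') :
    x' (h + 1) = x' h + 1 ∧ y' (h + 1) = y' h + 1 := by
  have := H.hit
  have := H.before h H.left_lt le_rfl
  have := H.after (h + 1) (by omega) H.lt_right
  omega

theorem lt_right_of_rightTrip (H : PromotionStep r e h x y x' y') (hme : m < e)
    (T : RightTrip (r + 1) (e + 1) m q t x' y') : q < e := by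
  by_contra! hq
  have hqe1 := T.lt_right
  obtain rfl : q = e := by omega
  have := H.after q H.lt_right le_rfl
  have := H.right_eq
  have := H.last
  have := T.drop.1
  have := T.drop.2 q (Set.mem_uIcc.2 (by omega))
  omega

theorem openerTrip_of_lt (H : PromotionStep r e h x y x' y') (hrm : r < m) (hmh : m < h)
    (T : OpenerTrip (e + 1) m q x' y') : OpenerTrip e m q x y := by
  have hm := H.before m hrm (by omega)
  have hm1 := H.before (m + 1) (by omega) (by omega)
  have hxm := H.pos m hrm (by omega)
  have hqh : q < h := by
    by_contra! hq
    have := H.before h (by omega) le_rfl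
    have := T.le h (by omega) (by omega)
    have := H.hit
    have := T.letter
    omega
  have hlt := H.lt_right
  have hq := H.before (q + 1) (by have := T.lt; omega) (by omega)
  refine ⟨T.lt, by omega, by have := T.letter; omega, fun p hmp hpq => ?_, by have := T.drop; omega⟩
  have := H.before p (by omega) (by omega)
  have := T.le p hmp hpq
  omega

theorem openerTrip_of_gt (H : PromotionStep r e h x y x' y') (hhm : h < m)
    (T : OpenerTrip (e + 1) m q x' y') : OpenerTrip e m q x y := by
  have hmq := T.lt
  have hqe1 := T.lt_right
  have hm := H.after m hhm (by omega)
  have hm1 := H.after (m + 1) (by omega) (by omega)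
  have hlh := H.left_lt
  have hpos := H.nonneg m (by omega) (by omega)
  have hqe : q < e := by
    by_contra! hq
    have := H.after e H.lt_right le_rfl
    have := T.le e (by omega) (by omega)
    have := H.right_eq
    have := T.letter
    omega
  have hq := H.after (q + 1) (by omega) (by omega)
  refine ⟨hmq, hqe, by have := T.letter; omega, fun p hmp hpq => ?_, by have := T.drop; omega⟩
  have := H.after p (by omega) (by omega)
  have := T.le p hmp hpq
  omega

theorem rightTrip_of_openerTrip (H : PromotionStep r e h x y x' y')
    (T : OpenerTrip (e + 1) h q x' y') : RightTrip r e h q 1 x y := by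
  obtain ⟨hxh, hxh1, hyh1⟩ := H.hit
  have hhq := T.lt
  have hrh := H.left_lt
  have hh := H.before h hrh le_rfl
  have hh1 := H.after (h + 1) (by omega) H.lt_right
  have hyh := H.pos h hrh le_rfl
  have hqe : q < e := by
    by_contra! hq
    have := H.after e H.lt_right le_rfl
    have := T.le e H.lt_right (by omega)
    have := H.right_eq
    omega
  refine ⟨hhq, hqe, by omega, le_rfl, ?_, by simpa using Ahead.zero, ?_, fun p hp => ?_⟩
  · refine Ahead.extend_of_drop (b := r + 1) (.of_le fun p hp => ?_) fun p hp hp' => ?_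
    · rw [Set.mem_uIcc] at hp
      have := H.pos p (by omega) (by omega)
      omega
    · rw [Set.mem_uIcc] at hp hp'
      obtain rfl : p = r := by omega
      exact ⟨p, Set.right_mem_uIcc, by have := H.left_eq; omega⟩
  · have := H.after (q + 1) (by omega) (by omega)
    have := H.nonneg (q + 1) (by omega) (by omega)
    have := T.drop
    omega
  · rw [Set.mem_uIcc] at hp
    have := H.after p (by omega) (by omega)
    have := H.nonneg p (by omega) (by omega)
    refine ⟨by omega, fun hpq => ?_⟩
    have := T.le p (by omega) (by omega)
    omega

theorem rightTrip_hitLetter_of_lt (H : PromotionStep r e h x y x' y') (hrm : r < m)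
    (hqh : q < h) (T : RightTrip (r + 1) (e + 1) m q t x' y') : RightTrip r e m q t x y := by
  have hmq := T.lt
  have hlt := H.lt_right
  have hm := H.before m hrm (by omega)
  have hm1 := H.before (m + 1) (by omega) (by omega)
  have hq := H.before (q + 1) (by omega) (by omega)
  have hyq := H.pos (q + 1) (by omega) (by omega)
  have hletter := T.letter
  have hsub := H.sub_eq_of_le_hit (a := m + 1) (b := q + 1) (by omega) (by omega)
  refine ⟨hmq, by omega, by omega, T.one_le, ?_, T.right.translate hsub,
    T.drop.translate fun p hp => (hsub p hp).symm⟩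
  refine (T.left.translate fun p hp =>
    (H.sub_eq_of_le_hit (by omega) (by omega) p hp).symm).extend_of_drop fun p hp hp' => ?_
  rw [Set.mem_uIcc] at hp hp'
  obtain rfl : p = r := by omega
  exact ⟨p, Set.right_mem_uIcc, by have := H.left_eq; have := T.drop.1; omega⟩

-- At the hit `x'` is `0`, its minimum, so `t` is the depth of the race at which `x'` gets there.
theorem level_eq_of_rightTrip (H : PromotionStep r e h x y x' y') (hrm : r < m)
    (hmh : m < h) (hhq : h ≤ q) (T : RightTrip (r + 1) (e + 1) m q t x' y') :
    t = x (m + 1) := by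
  have hxh := H.hit.1
  have hqe1 := T.lt_right
  have hm1 := H.before (m + 1) (by omega) (by omega)
  have hh := H.before h (by omega) le_rfl
  have hdropq := T.drop.1
  have := T.drop.2 h (Set.mem_uIcc.2 (by omega))
  obtain ⟨d, hd, hle⟩ := T.right (q + 1) Set.right_mem_uIcc
  rw [Set.mem_uIcc] at hd
  have := H.nonneg_promoted (p := d) (by omega) (by omega)
  omega

theorem dropsFirst_of_rightTrip (H : PromotionStep r e h x y x' y') (hrm : r < m)
    (hmh : m < h) (hhq : h ≤ q) (T : RightTrip (r + 1) (e + 1) m q t x' y') :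
    DropsFirst y x (m + 1) (q + 1) (t + 1) := by
  have hqe := H.lt_right_of_rightTrip (hmh.trans H.lt_right) T
  have hm1 := H.before (m + 1) (by omega) (by omega)
  have hq := H.after (q + 1) (by omega) (by omega)
  have hdropq := T.drop.1
  have ht := H.level_eq_of_rightTrip hrm hmh hhq T
  refine ⟨by omega, fun p hp => ?_⟩
  rw [Set.mem_uIcc] at hp
  have := H.nonneg p (by omega) (by omega)
  have := T.drop.2 p (Set.mem_uIcc.2 (by omega))
  refine ⟨by omega, fun hpq => ?_⟩
  rcases le_or_gt p h with hph | hph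
  · have := H.before p (by omega) hph
    omega
  · have := H.after p hph (by omega)
    omega

theorem rightTrip_hitLetter_of_lt_of_le (H : PromotionStep r e h x y x' y') (hrm : r < m)
    (hmh : m < h) (hhq : h ≤ q) (T : RightTrip (r + 1) (e + 1) m q t x' y') :
    RightTrip r e m q (t + 1) x y := by
  have hhit := H.hit
  obtain ⟨hxr, hyr⟩ := H.left_eq
  have hlt := H.lt_right
  have hqe := H.lt_right_of_rightTrip (by omega) T
  have hm := H.before m hrm (by omega)
  have hm1 := H.before (m + 1) (by omega) (by omega)
  have hletter := T.letter
  have hdrop := H.dropsFirst_of_rightTrip hrm hmh hhq T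
  have hyq := H.nonneg (q + 1) (by omega) (by omega)
  have hdropq := hdrop.1
  have ht := H.level_eq_of_rightTrip hrm hmh hhq T
  refine ⟨T.lt, hqe, by omega, by have := T.one_le; omega, ?_, ?_, hdrop⟩
  · have hleft : Ahead y x m (r + 1) t := T.left.translate fun p hp =>
      (H.sub_eq_of_le_hit (by omega) (by omega) p hp).symm
    refine (hleft.of_floor fun p hp => ?_).extend_of_drop fun p hp hp' => ?_
    · rw [Set.mem_uIcc] at hp
      have := H.pos p (by omega) (by omega)
      omega
    · rw [Set.mem_uIcc] at hp hp'
      obtain rfl : p = r := by omega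
      exact ⟨p, Set.right_mem_uIcc, by omega⟩
  · have hright : Ahead x y (m + 1) h (t - 1) :=
      (T.right.restrict (Set.mem_uIcc.2 (by omega))).translate
        (H.sub_eq_of_le_hit (by omega) (by omega))
    refine (hright.of_floor fun p hp => ?_).extend_of_drop fun p hp hp' => ?_
    · rw [Set.mem_uIcc] at hp
      have := H.before p (by omega) (by omega)
      have := T.drop.2 p (Set.mem_uIcc.2 (by omega))
      omega
    · rw [Set.mem_uIcc] at hp hp'
      exact ⟨h + 1, Set.mem_uIcc.2 (by omega), by omega⟩

theorem leftTrip_hitLetter_of_lt (H : PromotionStep r e h x y x' y') (hmh : m < h)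
    (T : LeftTrip (r + 1) (e + 1) m q t x' y') : LeftTrip r e m q t x y := by
  have hrq := T.left_le
  have hqm := T.lt
  have hlt := H.lt_right
  have hm := H.before m (by omega) (by omega)
  have hm1 := H.before (m + 1) (by omega) (by omega)
  have hq := H.before q (by omega) (by omega)
  have hxq := H.pos q (by omega) (by omega)
  have hletter := T.letter
  have hdropq := T.drop.1
  have hsub := H.sub_eq_of_le_hit (a := m) (b := q) (by omega) (by omega)
  refine ⟨by omega, hqm, by omega, T.one_le, T.left.translate fun p hp => (hsub p hp).symm, ?_,
    T.drop.translate hsub⟩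
  refine Ahead.extend_of_drop (b := h) ((T.right.restrict (Set.mem_uIcc.2 (by omega))).translate
    (H.sub_eq_of_le_hit (by omega) (by omega))) fun p hp hp' => ?_
  rw [Set.mem_uIcc] at hp hp'
  exact ⟨h + 1, Set.mem_uIcc.2 (by omega), by have := H.hit; omega⟩

theorem rightTrip_otherLetter_of_lt (H : PromotionStep r e h x y x' y') (hrm : r < m)
    (hmh : m < h) (T : RightTrip (r + 1) (e + 1) m q t y' x') : RightTrip r e m q t y x := by
  have hmq := T.lt
  have hlt := H.lt_right
  have hqe1 := T.lt_right
  have hdropq := T.drop.1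
  have hqh : q < h := by
    by_contra! hhq
    have := H.before h (by omega) le_rfl
    have := H.hit
    have := T.drop.2 h (Set.mem_uIcc.2 (by omega))
    have := H.nonneg_promoted (p := q + 1) (by omega) (by omega)
    omega
  have hm := H.before m hrm (by omega)
  have hm1 := H.before (m + 1) (by omega) (by omega)
  have hq := H.before (q + 1) (by omega) (by omega)
  have hxq := H.pos (q + 1) (by omega) (by omega)
  have hletter := T.letter
  have hsub := H.sub_eq_of_le_hit (a := m + 1) (b := q + 1) (by omega) (by omega)
  refine ⟨hmq, by omega, by omega, T.one_le, ?_, T.right.translate fun p hp => (hsub p hp).symm,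
    T.drop.translate hsub⟩
  refine (T.left.translate
    (H.sub_eq_of_le_hit (by omega) (by omega))).extend_of_drop fun p hp hp' => ?_
  rw [Set.mem_uIcc] at hp hp'
  obtain rfl : p = r := by omega
  exact ⟨p, Set.right_mem_uIcc, by have := H.left_eq; omega⟩

theorem leftTrip_otherLetter_of_lt (H : PromotionStep r e h x y x' y') (hmh : m < h)
    (T : LeftTrip (r + 1) (e + 1) m q t y' x') : LeftTrip r e m q t y x := by
  have hrq := T.left_le
  have hqm := T.lt
  have hlt := H.lt_right
  have hm := H.before m (by omega) (by omega)
  have hm1 := H.before (m + 1) (by omega) (by omega)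
  have hxh := H.hit.1
  have hletter := T.letter
  have hsub := H.sub_eq_of_le_hit (a := m) (b := q) (by omega) (by omega)
  have ht : t ≤ x (m + 1) := by
    obtain ⟨d, hd, hle⟩ := T.left q Set.right_mem_uIcc
    have := T.drop.1
    rw [Set.mem_uIcc] at hd
    have := H.before d (by omega) (by omega)
    have := H.pos d (by omega) (by omega)
    omega
  refine ⟨by omega, hqm, by omega, T.one_le, T.left.translate hsub, ?_,
    T.drop.translate fun p hp => (hsub p hp).symm⟩
  have hright : Ahead y x (m + 1) h (t - 1) :=
    (T.right.restrict (Set.mem_uIcc.2 (by omega))).translate fun p hp =>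
      (H.sub_eq_of_le_hit (by omega) (by omega) p hp).symm
  obtain ⟨d, hd, hle⟩ := hright h Set.right_mem_uIcc
  refine hright.extend_of_drop fun p hp hp' => ⟨d, ?_, by omega⟩
  rw [Set.mem_uIcc] at *
  omega

theorem rightTrip_hitLetter_of_gt (H : PromotionStep r e h x y x' y') (hhm : h < m)
    (T : RightTrip (r + 1) (e + 1) m q t x' y') : RightTrip r e m q t x y := by
  have hmq := T.lt
  have hqe1 := T.lt_right
  have hrh := H.left_lt
  have hqe := H.lt_right_of_rightTrip (by omega) T
  have hm := H.after m hhm (by omega)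
  have hm1 := H.after (m + 1) (by omega) (by omega)
  have hletter := T.letter
  have hsub := H.sub_eq_of_hit_lt (a := m + 1) (b := q + 1) (by omega) (by omega)
  refine ⟨hmq, hqe, by omega, T.one_le, ?_, T.right.translate hsub,
    T.drop.translate fun p hp => (hsub p hp).symm⟩
  refine Ahead.extend_of_le (b := h + 1)
    ((T.left.restrict (Set.mem_uIcc.2 (by omega))).translate fun p hp =>
      (H.sub_eq_of_hit_lt (by omega) (by omega) p hp).symm) fun p hp hp' => ?_
  rw [Set.mem_uIcc] at *
  have := H.hit
  have := H.nonneg p (by omega) (by omega)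
  omega

theorem leftTrip_hitLetter_of_gt (H : PromotionStep r e h x y x' y') (hhm : h < m) (hme : m < e)
    (T : LeftTrip (r + 1) (e + 1) m q t x' y') : LeftTrip r e m q t x y := by
  have hrq := T.left_le
  have hqm := T.lt
  have hletter := T.letter
  have hm := H.after m hhm (by omega)
  have hm1 := H.after (m + 1) (by omega) (by omega)
  have hhq : h < q := by
    by_contra! hqh
    have hhit := H.hit
    have hh1 := H.after (h + 1) (by omega) (by omega)
    have hq := H.before q (by omega) hqh
    have hxq := H.pos q (by omega) hqh
    have hdropq := T.drop.1
    have ht : t = x m + 1 := by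
      have := T.drop.2 (h + 1) (Set.mem_uIcc.2 (by omega))
      omega
    have hleft : y (m + 1) ≥ x (m + 1) + 1 := by
      obtain ⟨d, hd, hle⟩ := T.left (h + 1) (Set.mem_uIcc.2 (by omega))
      rw [Set.mem_uIcc] at hd
      have := H.after d (by omega) (by omega)
      have := H.nonneg d (by omega) (by omega)
      omega
    have hright : y (m + 1) ≤ x (m + 1) := by
      obtain ⟨d, hd, hle⟩ := T.right e (Set.mem_uIcc.2 (by omega))
      rw [Set.mem_uIcc] at hd
      have := H.after e (by omega) le_rfl
      have := H.right_eq
      have := H.after d (by omega) (by omega)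
      have := H.nonneg d (by omega) (by omega)
      omega
    omega
  have hsub := H.sub_eq_of_hit_lt (a := m) (b := q) (by omega) (by omega)
  exact ⟨by omega, hqm, by omega, T.one_le, T.left.translate fun p hp => (hsub p hp).symm,
    (T.right.restrict (Set.mem_uIcc.2 (by omega))).translate
      (H.sub_eq_of_hit_lt (by omega) (by omega)), T.drop.translate hsub⟩

theorem rightTrip_otherLetter_of_gt (H : PromotionStep r e h x y x' y') (hhm : h < m)
    (hqe : q < e) (T : RightTrip (r + 1) (e + 1) m q t y' x') : RightTrip r e m q t y x := by
  have hmq := T.lt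
  have hrh := H.left_lt
  have hm := H.after m hhm (by omega)
  have hm1 := H.after (m + 1) (by omega) (by omega)
  have hq := H.after (q + 1) (by omega) (by omega)
  have hxq := H.nonneg (q + 1) (by omega) (by omega)
  have hletter := T.letter
  have hsub := H.sub_eq_of_hit_lt (a := m + 1) (b := q + 1) (by omega) (by omega)
  refine ⟨hmq, hqe, by omega, T.one_le, ?_, T.right.translate fun p hp => (hsub p hp).symm,
    T.drop.translate hsub⟩
  refine Ahead.extend_of_drop (b := h + 1)
    ((T.left.restrict (Set.mem_uIcc.2 (by omega))).translate
      (H.sub_eq_of_hit_lt (by omega) (by omega))) fun p hp hp' => ?_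
  rw [Set.mem_uIcc] at hp hp'
  exact ⟨h + 1, Set.mem_uIcc.2 (by omega), by have := H.hit; have := T.drop.1; omega⟩

theorem level_of_rightTrip_last (H : PromotionStep r e h x y x' y') (hhm : h < m)
    (T : RightTrip (r + 1) (e + 1) m e t y' x') : t = y m ∧ t = x m + 1 := by
  have hme := T.lt
  have hm := H.after m hhm (by omega)
  have hm1 := H.after (m + 1) (by omega) (by omega)
  have hletter := T.letter
  have hlast := H.last
  have hright := H.right_eq
  have hdrope := T.drop.1
  have := (T.drop.2 (e + 1) Set.right_mem_uIcc).1
  obtain ⟨d, hd, hle⟩ := T.right e (Set.mem_uIcc.2 (by omega))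
  rw [Set.mem_uIcc] at hd
  have := H.after d (by omega) (by omega)
  have := H.after e (by omega) le_rfl
  have := H.nonneg d (by have := H.left_lt; omega) (by omega)
  omega

theorem pos_of_rightTrip_last (H : PromotionStep r e h x y x' y') (hhm : h < m)
    (T : RightTrip (r + 1) (e + 1) m e t y' x') {p : ℕ} (hrp : r < p) (hpm : p ≤ m) :
    1 ≤ y p := by
  have ht := H.level_of_rightTrip_last hhm T
  have hme := T.lt
  rcases le_or_gt p h with hph | hph
  · exact (H.pos p hrp hph).2
  · have hm := H.after m hhm (by omega)
    have hp := H.after p hph (by omega)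
    obtain ⟨d, hd, hle⟩ := T.left p (Set.mem_uIcc.2 (by omega))
    rw [Set.mem_uIcc] at hd
    have := H.after d (by omega) (by omega)
    have := H.nonneg d (by omega) (by omega)
    omega

-- The race to the right stops at height `0`, which on the left `y` first reaches in column `r`.
theorem leftTrip_of_rightTrip_last (H : PromotionStep r e h x y x' y') (hhm : h < m)
    (T : RightTrip (r + 1) (e + 1) m e t y' x') : LeftTrip r e m r t y x := by
  have hme := T.lt
  have hrh := H.left_lt
  have hm := H.after m hhm (by omega)
  have hm1 := H.after (m + 1) (by omega) (by omega)
  have hletter := T.letter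
  have hyr := H.left_eq.2
  have ht := H.level_of_rightTrip_last hhm T
  have hright : Ahead y x (m + 1) e (t - 1) :=
    (T.right.restrict (Set.mem_uIcc.2 (by omega))).translate fun p hp =>
      (H.sub_eq_of_hit_lt (by omega) (by omega) p hp).symm
  have hleft : Ahead x y m (h + 1) t :=
    (T.left.restrict (Set.mem_uIcc.2 (by omega))).translate
      (H.sub_eq_of_hit_lt (by omega) (by omega))
  refine ⟨le_rfl, by omega, by omega, T.one_le, ?_, hright, by omega, fun p hp => ?_⟩
  · refine (hleft.anti (by omega)).extend_of_drop fun p hp hp' => ?_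
    rw [Set.mem_uIcc] at hp hp'
    exact ⟨h + 1, Set.mem_uIcc.2 (by omega), by have := H.hit; omega⟩
  · rw [Set.mem_uIcc] at hp
    have := H.nonneg p (by omega) (by omega)
    exact ⟨by omega, fun hpr => by
      have := H.pos_of_rightTrip_last hhm T (p := p) (by omega) (by omega); omega⟩

theorem leftTrip_otherLetter_of_gt (H : PromotionStep r e h x y x' y') (hme : m < e)
    (hhq : h < q) (T : LeftTrip (r + 1) (e + 1) m q t y' x') : LeftTrip r e m q t y x := by
  have hrq := T.left_le
  have hqm := T.lt
  have hletter := T.letter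
  have hm := H.after m (by omega) (by omega)
  have hm1 := H.after (m + 1) (by omega) (by omega)
  have hsub := H.sub_eq_of_hit_lt (a := m) (b := q) (by omega) (by omega)
  exact ⟨by omega, hqm, by omega, T.one_le, T.left.translate hsub,
    (T.right.restrict (Set.mem_uIcc.2 (by omega))).translate
      fun p hp => (H.sub_eq_of_hit_lt (by omega) (by omega) p hp).symm,
    T.drop.translate fun p hp => (hsub p hp).symm⟩

theorem level_eq_of_leftTrip (H : PromotionStep r e h x y x' y') (hhm : h < m)
    (hme : m < e) (hqh : q ≤ h) (T : LeftTrip (r + 1) (e + 1) m q t y' x') : t = x m + 2 := by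
  have hrq := T.left_le
  have hm := H.after m hhm (by omega)
  have hh := H.before h H.left_lt le_rfl
  have hxh := H.hit.1
  have hdropq := T.drop.1
  have := T.drop.2 h (Set.mem_uIcc.2 (by omega))
  obtain ⟨d, hd, hle⟩ := T.left q Set.right_mem_uIcc
  rw [Set.mem_uIcc] at hd
  have := H.nonneg_promoted (p := d) (by omega) (by omega)
  omega

theorem leftTrip_otherLetter_of_gt_of_le (H : PromotionStep r e h x y x' y') (hhm : h < m)
    (hme : m < e) (hqh : q ≤ h) (T : LeftTrip (r + 1) (e + 1) m q t y' x') :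
    LeftTrip r e m q (t - 1) y x := by
  have hrq := T.left_le
  have hqm := T.lt
  have hletter := T.letter
  have hdropq := T.drop.1
  have hhit := H.hit
  have hm := H.after m hhm (by omega)
  have hm1 := H.after (m + 1) (by omega) (by omega)
  have hxm := H.nonneg m (by omega) (by omega)
  have hq := H.before q (by omega) hqh
  have hleft : Ahead x y m (h + 1) (t - 1) :=
    (T.left.restrict (Set.mem_uIcc.2 (by omega))).translate
      (H.sub_eq_of_hit_lt (by omega) (by omega))
  have hright : Ahead y x (m + 1) e (t - 1) :=
    (T.right.restrict (Set.mem_uIcc.2 (by omega))).translate fun p hp =>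
      (H.sub_eq_of_hit_lt (by omega) (by omega) p hp).symm
  have ht := H.level_eq_of_leftTrip hhm hme hqh T
  refine ⟨by omega, hqm, by omega, by omega, ?_, hright.anti (by omega), by omega, fun p hp => ?_⟩
  · refine (hleft.anti (by omega)).extend_of_drop fun p hp hp' => ?_
    rw [Set.mem_uIcc] at hp hp'
    exact ⟨h + 1, Set.mem_uIcc.2 (by omega), by omega⟩
  · rw [Set.mem_uIcc] at hp
    have := H.nonneg p (by omega) (by omega)
    have hdrop := T.drop.2 p (Set.mem_uIcc.2 (by omega))
    refine ⟨by omega, fun hpq => ?_⟩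
    rcases le_or_gt p h with hph | hph
    · have := H.before p (by omega) hph
      omega
    · by_contra! hy
      have := H.after p hph (by omega)
      obtain ⟨d, hd, hle⟩ := hleft p (Set.mem_uIcc.2 (by omega))
      rw [Set.mem_uIcc] at hd
      have := H.nonneg d (by omega) (by omega)
      omega

end PromotionStep

/-- The trip of letter `m` ends to its right, at letter `q`. -/
def TripEndsRight (r e m q : ℕ) (x y : ℕ → ℤ) : Prop :=
  OpenerTrip e m q x y ∨ ∃ t, RightTrip r e m q t x y ∨ RightTrip r e m q t y x

/-- The trip of letter `m` ends to its left, at letter `q`; this never happens if `m` is an `A`. -/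
def TripEndsLeft (r e m q : ℕ) (x y : ℕ → ℤ) : Prop :=
  ∃ t, LeftTrip r e m q t x y ∨ LeftTrip r e m q t y x

section TripEnds
variable {r e h m q : ℕ} {x y x' y' : ℕ → ℤ}

theorem TripEndsRight.symm (T : TripEndsRight r e m q x y) : TripEndsRight r e m q y x :=
  T.imp (fun T => ⟨T.lt, T.lt_right, T.letter.symm, fun p hmp hpq => (T.le p hmp hpq).symm,
    T.drop.symm⟩) fun ⟨t, T⟩ => ⟨t, T.symm⟩

theorem TripEndsLeft.symm (T : TripEndsLeft r e m q x y) : TripEndsLeft r e m q y x :=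
  T.imp fun _ T => T.symm

namespace PromotionStep

theorem tripEndsRight (H : PromotionStep r e h x y x' y') (hrm : r < m) (hqe : q < e)
    (T : TripEndsRight (r + 1) (e + 1) m q x' y') : TripEndsRight r e m q x y := by
  have hhit := H.opener_at_hit
  rcases lt_trichotomy m h with hmh | rfl | hhm
  · rcases T with T | ⟨t, T | T⟩
    · exact .inl (H.openerTrip_of_lt hrm hmh T)
    · rcases lt_or_ge q h with hqh | hhq
      · exact .inr ⟨t, .inl (H.rightTrip_hitLetter_of_lt hrm hqh T)⟩
      · exact .inr ⟨t + 1, .inl (H.rightTrip_hitLetter_of_lt_of_le hrm hmh hhq T)⟩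
    · exact .inr ⟨t, .inr (H.rightTrip_otherLetter_of_lt hrm hmh T)⟩
  · rcases T with T | ⟨t, T | T⟩
    · exact .inr ⟨1, .inl (H.rightTrip_of_openerTrip T)⟩
    all_goals have := T.letter; omega
  · rcases T with T | ⟨t, T | T⟩
    · exact .inl (H.openerTrip_of_gt hhm T)
    · exact .inr ⟨t, .inl (H.rightTrip_hitLetter_of_gt hhm T)⟩
    · exact .inr ⟨t, .inr (H.rightTrip_otherLetter_of_gt hhm hqe T)⟩

theorem tripEndsLeft_of_last (H : PromotionStep r e h x y x' y') (hrm : r < m)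
    (T : TripEndsRight (r + 1) (e + 1) m e x' y') : TripEndsLeft r e m r x y := by
  have hhit := H.opener_at_hit
  rcases lt_trichotomy m h with hmh | rfl | hhm
  · rcases T with T | ⟨t, T | T⟩
    · exact absurd (H.openerTrip_of_lt hrm hmh T).lt_right (lt_irrefl e)
    · exact absurd (H.lt_right_of_rightTrip (hmh.trans H.lt_right) T) (lt_irrefl e)
    · exact absurd (H.rightTrip_otherLetter_of_lt hrm hmh T).lt_right (lt_irrefl e)
  · rcases T with T | ⟨t, T | T⟩
    · exact absurd (H.rightTrip_of_openerTrip T).lt_right (lt_irrefl e)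
    all_goals have := T.letter; omega
  · rcases T with T | ⟨t, T | T⟩
    · exact absurd (H.openerTrip_of_gt hhm T).lt_right (lt_irrefl e)
    · exact absurd (H.lt_right_of_rightTrip T.lt T) (lt_irrefl e)
    · exact ⟨t, .inr (H.leftTrip_of_rightTrip_last hhm T)⟩

theorem tripEndsLeft (H : PromotionStep r e h x y x' y') (hme : m < e)
    (T : TripEndsLeft (r + 1) (e + 1) m q x' y') : TripEndsLeft r e m q x y := by
  have hhit := H.opener_at_hit
  obtain ⟨t, T | T⟩ := T
  · have hletter := T.letter
    rcases lt_trichotomy m h with hmh | rfl | hhm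
    · exact ⟨t, .inl (H.leftTrip_hitLetter_of_lt hmh T)⟩
    · omega
    · exact ⟨t, .inl (H.leftTrip_hitLetter_of_gt hhm hme T)⟩
  · have hletter := T.letter
    rcases lt_trichotomy m h with hmh | rfl | hhm
    · exact ⟨t, .inr (H.leftTrip_otherLetter_of_lt hmh T)⟩
    · omega
    · rcases lt_or_ge h q with hhq | hqh
      · exact ⟨t, .inr (H.leftTrip_otherLetter_of_gt hme hhq T)⟩
      · exact ⟨t - 1, .inr (H.leftTrip_otherLetter_of_gt_of_le hhm hme hqh T)⟩

end PromotionStep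
end TripEnds

namespace KLetter
variable {ℓ c : KLetter} {p : ℕ} {w : List KLetter}

/-- The change of `height ℓ` on reading the letter `c`; meant for `ℓ ≠ A`. -/
def letterStep (ℓ c : KLetter) : ℤ :=
  (if c = A then 1 else 0) - if c = ℓ then 1 else 0

/-- The excess of `A`'s over `ℓ`'s in the prefix of length `p` of `w`; meant for `ℓ ≠ A`. -/
def height (ℓ : KLetter) (w : List KLetter) (p : ℕ) : ℤ :=
  (w.take p).count A - (w.take p).count ℓ

theorem letterStep_A (hℓ : ℓ ≠ A) : letterStep ℓ A = 1 := by
  rw [letterStep, if_pos rfl, if_neg hℓ.symm, sub_zero]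

theorem letterStep_self (hℓ : ℓ ≠ A) : letterStep ℓ ℓ = -1 := by
  rw [letterStep, if_neg hℓ, if_pos rfl, zero_sub]

theorem letterStep_of_ne (hcA : c ≠ A) (hcℓ : c ≠ ℓ) : letterStep ℓ c = 0 := by
  rw [letterStep, if_neg hcA, if_neg hcℓ, sub_zero]

theorem letterStep_nonpos (hc : c ≠ A) : letterStep ℓ c ≤ 0 := by
  rw [letterStep, if_neg hc]
  split_ifs <;> decide

theorem negL_ne_A (hℓ : ℓ ≠ A) : negL ℓ ≠ A := by
  cases ℓ <;> simp_all [negL]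

theorem ne_negL (hℓ : ℓ ≠ A) : ℓ ≠ negL ℓ := by
  cases ℓ <;> simp_all [negL]

theorem height_zero : height ℓ w 0 = 0 := by
  simp only [height, List.take_zero, List.count_nil, Nat.cast_zero, sub_zero]

theorem height_succ (hp : p < w.length) :
    height ℓ w (p + 1) = height ℓ w p + letterStep ℓ (w.getD p A) := by
  rw [List.getD_eq_getElem _ _ hp]
  simp only [height, letterStep, List.take_succ_eq_append_getElem hp, List.count_append,
    List.count_singleton, beq_iff_eq, Nat.cast_add, Nat.cast_ite, Nat.cast_one, Nat.cast_zero]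
  ring

theorem getD_eq_A_of_height_lt (hp : p < w.length) (hlt : height ℓ w p < height ℓ w (p + 1)) :
    w.getD p A = A := by
  by_contra hne
  have := letterStep_nonpos (ℓ := ℓ) hne
  rw [height_succ hp] at hlt
  omega

theorem count_add_count_add_count (w : List KLetter) :
    w.count A + w.count B + w.count C = w.length := by
  induction w with
  | nil => rfl
  | cons c w ih => cases c <;> simp <;> omega

end KLetter

section Promotion
variable {p : ℕ} {w : List KLetter}

/-- The letter of `w` at position `kiota w`, which promotion moves to the end. In these terms
`keps w i = closer (pro^[i - 1] w)`. -/
def closer (w : List KLetter) : KLetter :=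
  w.getD (kiota w - 1) A

theorem length_pro (hw : w ≠ []) : (pro w).length = w.length := by
  have := List.length_pos_iff.2 hw
  simp only [pro, List.length_append, List.length_set, List.length_drop, List.length_singleton]
  omega

theorem getD_pro_of_lt (hk : 2 ≤ kiota w) (hp : p + 1 < w.length) :
    (pro w).getD p A = if p + 2 = kiota w then A else w.getD (p + 1) A := by
  have hlen : p < ((w.drop 1).set (kiota w - 2) A).length := by
    rw [List.length_set, List.length_drop]
    omega
  rw [pro, List.getD_append _ _ _ _ hlen, List.getD_eq_getElem _ _ hlen,
    List.getD_eq_getElem _ _ hp, List.getElem_set, List.getElem_drop]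
  simp only [show kiota w - 2 = p ↔ p + 2 = kiota w by omega, Nat.add_comm 1 p]

theorem getD_pro_last (hp : p + 1 = w.length) : (pro w).getD p A = closer w := by
  have hlen : ((w.drop 1).set (kiota w - 2) A).length = p := by
    rw [List.length_set, List.length_drop]
    omega
  rw [pro, List.getD_append_right _ _ _ _ hlen.le, hlen, Nat.sub_self]
  rfl

end Promotion

namespace IsKrewerasWord
variable {n p r : ℕ} {w : List KLetter} {ℓ : KLetter}

theorem iff_height :
    IsKrewerasWord n w ↔ w.length = 3 * n ∧
      ∀ ℓ ≠ A, height ℓ w (3 * n) = 0 ∧ ∀ p ≤ 3 * n, 0 ≤ height ℓ w p := by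
  refine and_congr_right fun hlen => ?_
  have hcount := count_add_count_add_count w
  constructor
  · rintro ⟨hA, hB, -, hprefix⟩ ℓ hℓ
    simp only [height, ← hlen, List.take_length]
    cases ℓ
    · contradiction
    · exact ⟨by omega, fun p _ => by have := (hprefix p).1; omega⟩
    · exact ⟨by omega, fun p _ => by have := (hprefix p).2; omega⟩
  · intro hheight
    obtain ⟨hB, hB'⟩ := hheight B (by decide)
    obtain ⟨hC, hC'⟩ := hheight C (by decide)
    simp only [height, ← hlen, List.take_length] at hB hC hB' hC'
    refine ⟨by omega, by omega, by omega, fun p => ?_⟩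
    rcases le_total p w.length with hp | hp
    · have := hB' p hp
      have := hC' p hp
      omega
    · rw [List.take_of_length_le hp]
      omega

theorem length_eq (hw : IsKrewerasWord n w) : w.length = 3 * n :=
  hw.1

theorem ne_nil (hw : IsKrewerasWord n w) (hn : 0 < n) : w ≠ [] :=
  List.length_pos_iff.1 (by rw [hw.length_eq]; omega)

theorem height_last (hw : IsKrewerasWord n w) (hℓ : ℓ ≠ A) : height ℓ w (3 * n) = 0 :=
  ((iff_height.1 hw).2 ℓ hℓ).1

theorem height_nonneg (hw : IsKrewerasWord n w) (hℓ : ℓ ≠ A) (hp : p ≤ 3 * n) :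
    0 ≤ height ℓ w p :=
  ((iff_height.1 hw).2 ℓ hℓ).2 p hp

theorem isLeast_kiota (hw : IsKrewerasWord n w) (hn : 0 < n) :
    IsLeast {k | 1 ≤ k ∧ ∃ ℓ ≠ A, height ℓ w k = 0} (kiota w) := by
  set test : ℕ → Bool := fun k => decide (1 ≤ k) &&
    (((w.take k).count A == (w.take k).count B) ||
      ((w.take k).count A == (w.take k).count C)) with htest
  have htest_iff (k : ℕ) : test k ↔ 1 ≤ k ∧ ∃ ℓ ≠ A, height ℓ w k = 0 := by
    simp only [htest, Bool.and_eq_true, Bool.or_eq_true, decide_eq_true_eq, beq_iff_eq, height,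
      sub_eq_zero, Nat.cast_inj]
    refine and_congr_right fun _ => ⟨?_, ?_⟩
    · rintro (hB | hC)
      exacts [⟨B, by decide, hB⟩, ⟨C, by decide, hC⟩]
    · rintro ⟨ℓ, hℓ, hk⟩
      cases ℓ
      exacts [absurd rfl hℓ, .inl hk, .inr hk]
  obtain ⟨k, hk⟩ : ∃ k, (List.range (w.length + 1)).find? test = some k := by
    rw [← Option.isSome_iff_exists, List.find?_isSome]
    exact ⟨3 * n, List.mem_range.2 (by rw [hw.length_eq]; omega),
      (htest_iff _).2 ⟨by omega, B, by decide, hw.height_last (by decide)⟩⟩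
  have hkiota : kiota w = k := by
    rw [kiota, List.headD_eq_head?_getD, List.head?_filter, hk, Option.getD_some]
  rw [hkiota]
  obtain ⟨hktest, -, hmin⟩ := List.find?_range_eq_some.1 hk
  refine ⟨(htest_iff k).1 hktest, fun p hp => ?_⟩
  by_contra! hpk
  simpa [(htest_iff p).2 hp] using hmin p hpk

theorem kiota_le (hw : IsKrewerasWord n w) (hn : 0 < n) : kiota w ≤ 3 * n :=
  (hw.isLeast_kiota hn).2 ⟨by omega, B, by decide, hw.height_last (by decide)⟩

theorem height_pos_of_lt_kiota (hw : IsKrewerasWord n w) (hn : 0 < n) (hℓ : ℓ ≠ A)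
    (hp : 1 ≤ p) (hpk : p < kiota w) : 1 ≤ height ℓ w p := by
  have hnonneg := hw.height_nonneg hℓ (hpk.le.trans (hw.kiota_le hn))
  have hne : height ℓ w p ≠ 0 := fun h => hpk.not_ge ((hw.isLeast_kiota hn).2 ⟨hp, ℓ, hℓ, h⟩)
  omega

theorem getD_zero (hw : IsKrewerasWord n w) (hn : 0 < n) : w.getD 0 A = A := by
  by_contra hne
  have hnonneg := hw.height_nonneg hne (p := 1) (by omega)
  rw [height_succ (by rw [hw.length_eq]; omega), height_zero, letterStep_self hne] at hnonneg
  omega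

theorem height_one (hw : IsKrewerasWord n w) (hn : 0 < n) (hℓ : ℓ ≠ A) : height ℓ w 1 = 1 := by
  rw [height_succ (by rw [hw.length_eq]; omega), height_zero, hw.getD_zero hn, letterStep_A hℓ,
    zero_add]

theorem two_le_kiota (hw : IsKrewerasWord n w) (hn : 0 < n) : 2 ≤ kiota w := by
  obtain ⟨hk, ℓ, hℓ, hzero⟩ := (hw.isLeast_kiota hn).1
  by_contra! hlt
  rw [show kiota w = 1 by omega, hw.height_one hn hℓ] at hzero
  omega

theorem height_kiota (hw : IsKrewerasWord n w) (hn : 0 < n) :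
    height ℓ w (kiota w) = height ℓ w (kiota w - 1) + letterStep ℓ (closer w) := by
  have hk := hw.two_le_kiota hn
  have hkN := hw.kiota_le hn
  rw [closer, ← height_succ (by rw [hw.length_eq]; omega), Nat.sub_add_cancel (by omega)]

theorem exists_closer_eq (hw : IsKrewerasWord n w) (hn : 0 < n) :
    ∃ ℓ ≠ A, closer w = ℓ ∧ height ℓ w (kiota w) = 0 := by
  obtain ⟨-, ℓ, hℓ, hzero⟩ := (hw.isLeast_kiota hn).1
  have hk := hw.two_le_kiota hn
  have hpos := hw.height_pos_of_lt_kiota hn hℓ (p := kiota w - 1) (by omega) (by omega)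
  have hdrop : letterStep ℓ (closer w) < 0 := by
    have := hw.height_kiota hn (ℓ := ℓ)
    omega
  refine ⟨ℓ, hℓ, ?_, hzero⟩
  by_contra hne
  by_cases hA : closer w = A
  · rw [hA, letterStep_A hℓ] at hdrop
    omega
  · rw [letterStep_of_ne hA hne] at hdrop
    omega

theorem closer_ne_A (hw : IsKrewerasWord n w) (hn : 0 < n) : closer w ≠ A := by
  obtain ⟨ℓ, hℓ, rfl, -⟩ := hw.exists_closer_eq hn
  exact hℓ

theorem height_closer_kiota (hw : IsKrewerasWord n w) (hn : 0 < n) :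
    height (closer w) w (kiota w) = 0 := by
  obtain ⟨ℓ, -, rfl, hzero⟩ := hw.exists_closer_eq hn
  exact hzero

theorem height_pro (hw : IsKrewerasWord n w) (hn : 0 < n) (hℓ : ℓ ≠ A) (hp : p < 3 * n) :
    height ℓ (pro w) p = height ℓ w (p + 1) -
      if p + 1 < kiota w then 1 else letterStep ℓ (closer w) := by
  have hlen := hw.length_eq
  have hk := hw.two_le_kiota hn
  induction p with
  | zero =>
    rw [hw.height_one hn hℓ, height_zero, if_pos (by omega), sub_self]
  | succ p ih =>
    rw [height_succ (by rw [length_pro (hw.ne_nil hn)]; omega), ih (by omega),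
      getD_pro_of_lt hk (by omega), height_succ (p := p + 1) (by omega)]
    rcases lt_trichotomy (p + 2) (kiota w) with hpk | hpk | hpk
    · rw [if_pos (by omega), if_neg (by omega), if_pos (by omega)]
      ring
    · have hcloser : w.getD (p + 1) A = closer w := by
        rw [closer, ← hpk]
        rfl
      rw [if_pos (by omega), if_pos hpk, if_neg (by omega), letterStep_A hℓ, hcloser]
      ring
    · rw [if_neg (by omega), if_neg (by omega), if_neg (by omega)]
      ring

theorem height_pro_last (hw : IsKrewerasWord n w) (hn : 0 < n) (hℓ : ℓ ≠ A) :
    height ℓ (pro w) (3 * n) = 0 := by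
  have hlen := hw.length_eq
  have hkN := hw.kiota_le hn
  obtain ⟨p, hp⟩ : ∃ p, 3 * n = p + 1 := ⟨3 * n - 1, by omega⟩
  rw [hp, height_succ (by rw [length_pro (hw.ne_nil hn)]; omega), hw.height_pro hn hℓ (by omega),
    if_neg (by omega), getD_pro_last (by omega), ← hp, hw.height_last hℓ]
  ring

protected theorem pro (hw : IsKrewerasWord n w) (hn : 0 < n) : IsKrewerasWord n (pro w) := by
  refine iff_height.2 ⟨(length_pro (hw.ne_nil hn)).trans hw.length_eq, fun ℓ hℓ =>
    ⟨hw.height_pro_last hn hℓ, fun p hp => ?_⟩⟩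
  rcases hp.lt_or_eq with hp | rfl
  · have hnonneg := hw.height_nonneg hℓ (p := p + 1) hp
    rw [hw.height_pro hn hℓ hp]
    split_ifs with hpk
    · have := hw.height_pos_of_lt_kiota hn hℓ (by omega) hpk
      omega
    · have := letterStep_nonpos (ℓ := ℓ) (hw.closer_ne_A hn)
      omega
  · exact (hw.height_pro_last hn hℓ).ge

theorem pro_iterate (hw : IsKrewerasWord n w) (hn : 0 < n) (r : ℕ) :
    IsKrewerasWord n (pro^[r] w) :=
  Function.Iterate.rec _ hw (fun _ h => h.pro hn) r

theorem getD_pro_iterate (hw : IsKrewerasWord n w) (hn : 0 < n) (hp : p + r < 3 * n) :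
    (pro^[r] w).getD p A = A ∨ (pro^[r] w).getD p A = w.getD (p + r) A := by
  induction r generalizing p with
  | zero => exact .inr rfl
  | succ r ih =>
    have hr := hw.pro_iterate hn r
    rw [Function.iterate_succ_apply',
      getD_pro_of_lt (hr.two_le_kiota hn) (by rw [hr.length_eq]; omega)]
    split_ifs
    · exact .inl rfl
    · rw [show p + (r + 1) = p + 1 + r by omega]
      exact ih (by omega)

theorem getD_eq_closer (hw : IsKrewerasWord n w) (hn : 0 < n)
    (hq : r + kiota (pro^[r] w) ≤ 3 * n) :
    w.getD (r + kiota (pro^[r] w) - 1) A = closer (pro^[r] w) := by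
  have hr := hw.pro_iterate hn r
  have hk := hr.two_le_kiota hn
  have hcloser := hw.getD_pro_iterate hn (p := kiota (pro^[r] w) - 1) (r := r) (by omega)
  rw [show kiota (pro^[r] w) - 1 + r = r + kiota (pro^[r] w) - 1 by omega] at hcloser
  exact (hcloser.resolve_left (hr.closer_ne_A hn)).symm

theorem promotionStep_pro (hw : IsKrewerasWord n w) (hn : 0 < n) (r : ℕ) :
    PromotionStep r (r + 3 * n) (r + kiota w - 1)
      (fun p => height (closer w) w (p - r)) (fun p => height (negL (closer w)) w (p - r))
      (fun p => height (closer w) (pro w) (p - (r + 1)))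
      (fun p => height (negL (closer w)) (pro w) (p - (r + 1))) := by
  have hc := hw.closer_ne_A hn
  have hc' := negL_ne_A hc
  have hk := hw.two_le_kiota hn
  have hkN := hw.kiota_le hn
  constructor
  · simp only [Nat.sub_self, height_zero, and_self]
  · simp only [Nat.add_sub_cancel_left, hw.height_last hc, hw.height_last hc', and_self]
  · exact fun p _ _ => ⟨hw.height_nonneg hc (by omega), hw.height_nonneg hc' (by omega)⟩
  · omega
  · omega
  · exact fun p _ _ => ⟨hw.height_pos_of_lt_kiota hn hc (by omega) (by omega),
      hw.height_pos_of_lt_kiota hn hc' (by omega) (by omega)⟩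
  · rw [show r + kiota w - 1 - r = kiota w - 1 by omega,
      show r + kiota w - 1 + 1 - r = kiota w by omega]
    have hx := hw.height_kiota hn (ℓ := closer w)
    have hy := hw.height_kiota hn (ℓ := negL (closer w))
    rw [letterStep_self hc, hw.height_closer_kiota hn] at hx
    rw [letterStep_of_ne hc (ne_negL hc)] at hy
    exact ⟨by omega, hw.height_closer_kiota hn, by omega⟩
  · intro p _ _
    rw [hw.height_pro hn hc (by omega), hw.height_pro hn hc' (by omega), if_pos (by omega),
      if_pos (by omega), show p - (r + 1) + 1 = p - r by omega]
    exact ⟨rfl, rfl⟩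
  · intro p _ _
    rw [hw.height_pro hn hc (by omega), hw.height_pro hn hc' (by omega), if_neg (by omega),
      if_neg (by omega), show p - (r + 1) + 1 = p - r by omega, letterStep_self hc,
      letterStep_of_ne hc (ne_negL hc)]
    omega
  · rw [show r + 3 * n + 1 - (r + 1) = 3 * n by omega]
    exact ⟨hw.height_pro_last hn hc, hw.height_pro_last hn hc'⟩

end IsKrewerasWord

/-- The heights of `pro^[r] w` in the stack of promotions of `w`, whose row `r` is shifted `r`
columns to the right and so occupies the columns `r, …, r + 3n`. -/
def rowHeight (ℓ : KLetter) (w : List KLetter) (r p : ℕ) : ℤ :=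
  height ℓ (pro^[r] w) (p - r)

namespace IsKrewerasWord
variable {n q r s m : ℕ} {w : List KLetter}

theorem exists_promotionStep_rowHeight (hw : IsKrewerasWord n w) (hn : 0 < n) (r : ℕ) :
    ∃ h, PromotionStep r (r + 3 * n) h
        (rowHeight B w r) (rowHeight C w r) (rowHeight B w (r + 1)) (rowHeight C w (r + 1)) ∨
      PromotionStep r (r + 3 * n) h
        (rowHeight C w r) (rowHeight B w r) (rowHeight C w (r + 1)) (rowHeight B w (r + 1)) := by
  have hr := hw.pro_iterate hn r
  have hne := hr.closer_ne_A hn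
  have hstep := hr.promotionStep_pro hn r
  simp only [← Function.iterate_succ_apply'] at hstep
  refine ⟨r + kiota (pro^[r] w) - 1, ?_⟩
  rcases hc : closer (pro^[r] w) <;> rw [hc] at hne hstep
  exacts [absurd rfl hne, .inl hstep, .inr hstep]

theorem openerTrip_rowHeight (hw : IsKrewerasWord n w) (hn : 0 < n) (r : ℕ) :
    OpenerTrip (r + 3 * n) r (r + kiota (pro^[r] w) - 1) (rowHeight B w r) (rowHeight C w r) := by
  have hr := hw.pro_iterate hn r
  have hk := hr.two_le_kiota hn
  have hkN := hr.kiota_le hn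
  have hne := hr.closer_ne_A hn
  have hzero := hr.height_closer_kiota hn
  have hstart {ℓ : KLetter} : rowHeight ℓ w r r = 0 := by
    rw [rowHeight, Nat.sub_self, height_zero]
  have hone {ℓ : KLetter} (hℓ : ℓ ≠ A) : rowHeight ℓ w r (r + 1) = 1 := by
    rw [rowHeight, Nat.add_sub_cancel_left, hr.height_one hn hℓ]
  have hpos {ℓ : KLetter} (hℓ : ℓ ≠ A) {p : ℕ} (hrp : r < p)
      (hp : p ≤ r + kiota (pro^[r] w) - 1) : 1 ≤ rowHeight ℓ w r p :=
    hr.height_pos_of_lt_kiota hn hℓ (by omega) (by omega)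
  have hB : B ≠ A := by decide
  have hC : C ≠ A := by decide
  refine ⟨by omega, by omega, ?_, fun p hrp hp => ?_, ?_⟩
  · rw [hone hB, hone hC, hstart, hstart]
    exact ⟨rfl, rfl⟩
  · rw [hone hB, hone hC]
    exact ⟨hpos hB hrp hp, hpos hC hrp hp⟩
  · rw [hstart, hstart, rowHeight, rowHeight,
      show r + kiota (pro^[r] w) - 1 + 1 - r = kiota (pro^[r] w) by omega]
    rcases hc : closer (pro^[r] w) <;> rw [hc] at hne hzero
    exacts [absurd rfl hne, .inl hzero, .inr hzero]

theorem tripEndsRight_rowHeight_of_le (hw : IsKrewerasWord n w) (hn : 0 < n) (hrs : r ≤ s)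
    (hsm : s ≤ m) (hq : q < r + 3 * n)
    (T : TripEndsRight s (s + 3 * n) m q (rowHeight B w s) (rowHeight C w s)) :
    TripEndsRight r (r + 3 * n) m q (rowHeight B w r) (rowHeight C w r) := by
  induction s, hrs using Nat.le_induction with
  | base => exact T
  | succ s hrs ih =>
    rw [Nat.add_right_comm s] at T
    refine ih (by omega) ?_
    obtain ⟨h, H | H⟩ := hw.exists_promotionStep_rowHeight hn s
    · exact H.tripEndsRight (by omega) (by omega) T
    · exact (H.tripEndsRight (by omega) (by omega) T.symm).symm

theorem tripEndsLeft_rowHeight_of_last (hw : IsKrewerasWord n w) (hn : 0 < n) (hrm : r < m)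
    (T : TripEndsRight (r + 1) (r + 1 + 3 * n) m (r + 3 * n)
      (rowHeight B w (r + 1)) (rowHeight C w (r + 1))) :
    TripEndsLeft r (r + 3 * n) m r (rowHeight B w r) (rowHeight C w r) := by
  rw [Nat.add_right_comm r] at T
  obtain ⟨h, H | H⟩ := hw.exists_promotionStep_rowHeight hn r
  · exact H.tripEndsLeft_of_last hrm T
  · exact (H.tripEndsLeft_of_last hrm T.symm).symm

theorem tripEndsLeft_rowHeight_of_le (hw : IsKrewerasWord n w) (hn : 0 < n) (hrs : r ≤ s)
    (hm : m < r + 3 * n)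
    (T : TripEndsLeft s (s + 3 * n) m q (rowHeight B w s) (rowHeight C w s)) :
    TripEndsLeft r (r + 3 * n) m q (rowHeight B w r) (rowHeight C w r) := by
  induction s, hrs using Nat.le_induction with
  | base => exact T
  | succ s hrs ih =>
    rw [Nat.add_right_comm s] at T
    refine ih ?_
    obtain ⟨h, H | H⟩ := hw.exists_promotionStep_rowHeight hn s
    · exact H.tripEndsLeft (by omega) T
    · exact (H.tripEndsLeft (by omega) T.symm).symm

end IsKrewerasWord

theorem LeftTrip.lt_succ {r e m q : ℕ} {t : ℤ} {x y : ℕ → ℤ} (T : LeftTrip r e m q t x y) :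
    x q < x (q + 1) := by
  have hlt := T.lt
  have := T.drop.1
  have := (T.drop.2 (q + 1) (Set.mem_uIcc.2 (by omega))).2 (by omega)
  omega

theorem TripEndsLeft.getD_eq_A {r e m q : ℕ} {w : List KLetter} (hq : q < w.length)
    (T : TripEndsLeft r e m q (height B w) (height C w)) : w.getD q A = A := by
  obtain ⟨t, T | T⟩ := T
  · exact getD_eq_A_of_height_lt hq T.lt_succ
  · exact getD_eq_A_of_height_lt hq T.lt_succ

theorem IsKrewerasWord.getD_eq_A_of_wrap {n q r : ℕ} {w : List KLetter} (hw : IsKrewerasWord n w)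
    (hn : 0 < n) (hqr : q < r) (hr : r < 3 * n)
    (hwrap : r + kiota (pro^[r] w) - 1 = q + 3 * n) : w.getD q A = A := by
  have opener : OpenerTrip (r + 3 * n) r (q + 3 * n) (rowHeight B w r) (rowHeight C w r) :=
    hwrap ▸ hw.openerTrip_rowHeight hn r
  have last := hw.tripEndsRight_rowHeight_of_le hn (r := q + 1) hqr le_rfl (by omega) (.inl opener)
  have left := hw.tripEndsLeft_rowHeight_of_last hn hqr last
  have base := hw.tripEndsLeft_rowHeight_of_le hn (r := 0) (Nat.zero_le q) (by omega) left
  exact TripEndsLeft.getD_eq_A (by rw [hw.length_eq]; omega) base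

/-- The pair `(σ_w, ε_w)` determines `w`: for `i ∈ {1, …, 3n}`, with `j = σ_w⁻¹(i)`,
we have `w_i = A` if `j > i`, and `w_i = ε_w(j)` if `j < i` (letters are 1-indexed). -/
theorem ksigma_keps_determine_word (n : ℕ) (w : List KLetter)
    (hw : IsKrewerasWord n w) :
    ∀ i j : ℕ, 1 ≤ i → i ≤ 3 * n → 1 ≤ j → j ≤ 3 * n → ksigma n w j = i →
      ((i < j → w.getD (i - 1) KLetter.A = KLetter.A) ∧
        (j < i → w.getD (i - 1) KLetter.A = keps w j)) := by
  intro i j hi hiN hj hjN hσ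
  have hn : 0 < n := by omega
  have hwj := hw.pro_iterate hn (j - 1)
  have hk := hwj.two_le_kiota hn
  have hkN := hwj.kiota_le hn
  rw [ksigma] at hσ
  rcases lt_or_ge (kiota (pro^[j - 1] w) + j - 2) (3 * n) with hlt | hge
  · rw [Nat.mod_eq_of_lt hlt] at hσ
    refine ⟨by omega, fun _ => ?_⟩
    rw [show i - 1 = j - 1 + kiota (pro^[j - 1] w) - 1 by omega]
    exact hw.getD_eq_closer hn (by omega)
  · rw [Nat.mod_eq_sub_mod hge, Nat.mod_eq_of_lt (by omega)] at hσ
    exact ⟨fun hij => hw.getD_eq_A_of_wrap hn (r := j - 1) (by omega) (by omega) (by omega),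
      by omega⟩
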